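/- Let m and n be integers with 2 ≤ m ≤ n/2 and let B be the open unit ball in ℝⁿ centered at the origin. Then for every radial function u ∈ C₀^∞(B) one has (n−2)^{n/m} · ∫_B |∇u(x)|^{n/m} / |x|^{n − n/m} dx ≤ ∫_B |Δu(x)|^{n/m} / |x|^{n − 2n/m} dx. -/

import Mathlib

/-!
For `u x = φ ‖x‖` and `x ≠ 0` one has `‖∇u x‖ = |φ' r|` and `Δu x = φ'' r + (n - 1) φ' r / r`
with `r = ‖x‖` (`norm_gradient_radial`, `lap_radial`). In polar coordinates
(`setIntegral_ball_radial`), with `p = n / m`, `v = φ'` and `c = n - 2`, the claim becomes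
`c ^ p * ∫₀¹ |v| ^ p r ^ (p - 1) ≤ ∫₀¹ |r v' + (c + 1) v| ^ p r ^ (p - 1)`,
which is `hardy_one_dim`.

This weighted Hardy inequality is proved by a pointwise estimate. Put `q = r v' + (c + 1) v`, so
that `(|v| ^ p r ^ p)' = p |v| ^ (p - 2) v (q - c v) r ^ (p - 1)`. The tangent-line inequality for
the convex function `|·| ^ p` at `c v` (`tangent_abs_rpow`) then gives
`c ^ p |v| ^ p r ^ (p - 1) + c ^ (p - 1) (|v| ^ p r ^ p)' ≤ |q| ^ p r ^ (p - 1)`.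
The total derivative integrates to zero over `[0, 1]`, because `v 1 = 0` and `r ^ p` vanishes
at `0`.
-/


open MeasureTheory Real

/-- `E₁(t) = 1 - ln t`. -/
noncomputable def E1 (t : ℝ) : ℝ := 1 - Real.log t

/-- `E₂(t) = ln (e E₁(t)) = 1 + ln E₁(t)`. -/
noncomputable def E2 (t : ℝ) : ℝ := 1 + Real.log (E1 t)

/-- The Euclidean Laplacian of a scalar function on `ℝⁿ`. -/
noncomputable def lap {n : ℕ} (f : EuclideanSpace ℝ (Fin n) → ℝ) :
    EuclideanSpace ℝ (Fin n) → ℝ := fun x =>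
  ∑ i, fderiv ℝ (fun y => fderiv ℝ f y (EuclideanSpace.single i 1)) x (EuclideanSpace.single i 1)

lemma abs_rpow_sub_two_mul_self_mul_self {p : ℝ} (hp : p ≠ 0) (b : ℝ) :
    |b| ^ (p - 2) * b * b = |b| ^ p := by
  rcases eq_or_ne b 0 with rfl | hb
  · simp [Real.zero_rpow hp]
  · have hb' : 0 < |b| := abs_pos.mpr hb
    rw [mul_assoc, ← abs_mul_abs_self b, ← mul_assoc, ← Real.rpow_add_one hb'.ne',
      ← Real.rpow_add_one hb'.ne']
    congr 1; ring

/-- Tangent-line inequality for the convex function `|·| ^ p`; it follows from Young's inequality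
for `|a| * |b| ^ (p - 1)`. -/
lemma tangent_abs_rpow {p : ℝ} (hp : 1 < p) (a b : ℝ) :
    p * |b| ^ (p - 2) * b * (a - b) ≤ |a| ^ p - |b| ^ p := by
  have hpq : p.HolderConjugate (p / (p - 1)) := Real.HolderConjugate.conjExponent hp
  have hY := Real.young_inequality_of_nonneg (abs_nonneg a)
    (Real.rpow_nonneg (abs_nonneg b) (p - 1)) hpq
  have h1 : (|b| ^ (p - 1)) ^ (p / (p - 1)) = |b| ^ p := by
    rw [← Real.rpow_mul (abs_nonneg b)]
    congr 1
    field_simp [show p - 1 ≠ 0 by linarith]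
  have hb2 := abs_rpow_sub_two_mul_self_mul_self (by linarith : p ≠ 0) b
  have hb1 : |b| ^ (p - 2) * b * a ≤ |a| * |b| ^ (p - 1) := by
    rcases eq_or_ne b 0 with rfl | hb
    · simp [Real.zero_rpow (by linarith : p - 1 ≠ 0)]
    · have hb' : 0 < |b| := abs_pos.mpr hb
      calc |b| ^ (p - 2) * b * a = |b| ^ (p - 2) * (b * a) := by ring
        _ ≤ |b| ^ (p - 2) * (|b| * |a|) := by
            refine mul_le_mul_of_nonneg_left ?_ (Real.rpow_nonneg hb'.le _)
            rw [← abs_mul]; exact le_abs_self _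
        _ = |a| * |b| ^ (p - 1) := by
            rw [← mul_assoc, ← Real.rpow_add_one hb'.ne', mul_comm]
            congr 2; ring
  rw [h1] at hY
  have hY' : p * (|a| * |b| ^ (p - 1)) ≤ |a| ^ p + (p - 1) * |b| ^ p := by
    have := mul_le_mul_of_nonneg_left hY (by linarith : 0 ≤ p)
    refine this.trans (le_of_eq ?_)
    field_simp
  have := mul_le_mul_of_nonneg_left hb1 (by linarith : 0 ≤ p)
  linarith [congrArg (p * ·) hb2, show p * |b| ^ (p - 2) * b * (a - b) =
    p * (|b| ^ (p - 2) * b * a) - p * (|b| ^ (p - 2) * b * b) by ring]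

/-- Weighted Hardy inequality on `(0, 1)`. With `v` the derivative of a radial profile and
`c = n - 2`, the expression `r v' + (c + 1) v` is `r` times the Laplacian. -/
lemma hardy_one_dim {p c : ℝ} (hp : 2 ≤ p) (hc : 0 ≤ c) {v : ℝ → ℝ} (hv : ContDiff ℝ 1 v)
    (hv1 : v 1 = 0) :
    c ^ p * ∫ r in (0 : ℝ)..1, |v r| ^ p * r ^ (p - 1) ≤
      ∫ r in (0 : ℝ)..1, |r * deriv v r + (c + 1) * v r| ^ p * r ^ (p - 1) := by
  have hvc : Continuous v := hv.continuous
  have hdc : Continuous (deriv v) := hv.continuous_deriv le_rfl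
  have hid : Continuous fun r : ℝ => r ^ (p - 1) :=
    Real.continuous_rpow_const (by linarith)
  have hip : Continuous fun r : ℝ => r ^ p := Real.continuous_rpow_const (by linarith)
  have hA : Continuous fun r => |v r| ^ p * r ^ (p - 1) :=
    (hvc.abs.rpow_const fun _ => Or.inr (by linarith)).mul hid
  have hF : Continuous fun r => |r * deriv v r + (c + 1) * v r| ^ p * r ^ (p - 1) :=
    (Continuous.rpow_const (by fun_prop) fun _ => Or.inr (by linarith)).mul hid
  -- The derivative of `|v| ^ p * r ^ p`.
  set G' : ℝ → ℝ := fun r => p * |v r| ^ (p - 2) * v r * deriv v r * r ^ p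
    + |v r| ^ p * (p * r ^ (p - 1)) with hG'
  have hG'c : Continuous G' := by
    have h2 : Continuous fun r => |v r| ^ (p - 2) :=
      hvc.abs.rpow_const fun _ => Or.inr (by linarith)
    have h3 : Continuous fun r => |v r| ^ p :=
      hvc.abs.rpow_const fun _ => Or.inr (by linarith)
    fun_prop
  have hGd : ∀ r ∈ Set.uIcc (0 : ℝ) 1,
      HasDerivAt (fun r => |v r| ^ p * r ^ p) (G' r) r := fun r _ =>
    ((hasDerivAt_abs_rpow (v r) (by linarith)).comp r
      (hv.differentiable one_ne_zero r).hasDerivAt).mul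
      (Real.hasDerivAt_rpow_const (Or.inr (by linarith)))
  have hG0 : ∫ r in (0 : ℝ)..1, G' r = 0 := by
    rw [intervalIntegral.integral_eq_sub_of_hasDerivAt hGd (hG'c.intervalIntegrable _ _)]
    simp [hv1, Real.zero_rpow (by linarith : p ≠ 0)]
  have key : ∀ r ∈ Set.Icc (0 : ℝ) 1, c ^ p * (|v r| ^ p * r ^ (p - 1)) + c ^ (p - 1) * G' r ≤
      |r * deriv v r + (c + 1) * v r| ^ p * r ^ (p - 1) := by
    intro r hr
    have ht := tangent_abs_rpow (by linarith : 1 < p) (r * deriv v r + (c + 1) * v r) (c * v r)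
    have hr' : 0 ≤ r ^ (p - 1) := Real.rpow_nonneg hr.1 _
    have hrp : r ^ p = r * r ^ (p - 1) := by
      rcases hr.1.eq_or_lt with rfl | h0
      · simp [Real.zero_rpow (by linarith : p ≠ 0)]
      · rw [mul_comm, ← Real.rpow_add_one h0.ne']; congr 1; ring
    have hv2 := (abs_rpow_sub_two_mul_self_mul_self (by linarith : p ≠ 0) (v r)).symm
    have hc1 : c ^ (p - 2) * c = c ^ (p - 1) := by
      rcases hc.eq_or_lt with rfl | h0
      · simp [Real.zero_rpow (by linarith : p - 1 ≠ 0)]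
      · rw [← Real.rpow_add_one h0.ne']; congr 1; ring
    have hab : |c * v r| ^ p = c ^ p * |v r| ^ p := by
      rw [abs_mul, abs_of_nonneg hc, Real.mul_rpow hc (abs_nonneg _)]
    have hab2 : |c * v r| ^ (p - 2) = c ^ (p - 2) * |v r| ^ (p - 2) := by
      rw [abs_mul, abs_of_nonneg hc, Real.mul_rpow hc (abs_nonneg _)]
    rw [hab, hab2] at ht
    have hmul := mul_le_mul_of_nonneg_right ht hr'
    have hid : p * (c ^ (p - 2) * |v r| ^ (p - 2)) * (c * v r) *
        (r * deriv v r + (c + 1) * v r - c * v r) * r ^ (p - 1) = c ^ (p - 1) * G' r := by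
      rw [hG', ← hc1]
      simp only
      rw [hrp, hv2]; ring
    rw [hid] at hmul
    linarith
  calc c ^ p * ∫ r in (0 : ℝ)..1, |v r| ^ p * r ^ (p - 1)
      = ∫ r in (0 : ℝ)..1, (c ^ p * (|v r| ^ p * r ^ (p - 1)) + c ^ (p - 1) * G' r) := by
        rw [intervalIntegral.integral_add ((hA.const_mul _).intervalIntegrable _ _)
          ((hG'c.const_mul _).intervalIntegrable _ _), intervalIntegral.integral_const_mul,
          intervalIntegral.integral_const_mul, hG0]
        ring
    _ ≤ _ := intervalIntegral.integral_mono_on zero_le_one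
        (((hA.const_mul _).add (hG'c.const_mul _)).intervalIntegrable _ _)
        (hF.intervalIntegrable _ _) key

lemma hasFDerivAt_norm_of_ne {n : ℕ} {x : EuclideanSpace ℝ (Fin n)} (hx : x ≠ 0) :
    HasFDerivAt (fun y => ‖y‖) (‖x‖⁻¹ • innerSL ℝ x) x := by
  have hx' : ‖x‖ ≠ 0 := norm_ne_zero_iff.mpr hx
  have h := (hasStrictFDerivAt_norm_sq x).hasFDerivAt.sqrt (by positivity)
  simp only [Real.sqrt_sq (norm_nonneg _)] at h
  convert! h using 1
  ext y
  simp
  field_simp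

lemma hasFDerivAt_radial {n : ℕ} {φ : ℝ → ℝ} {x : EuclideanSpace ℝ (Fin n)} (hx : x ≠ 0)
    (hφ : DifferentiableAt ℝ φ ‖x‖) :
    HasFDerivAt (fun y => φ ‖y‖) (deriv φ ‖x‖ • (‖x‖⁻¹ • innerSL ℝ x)) x :=
  hφ.hasDerivAt.comp_hasFDerivAt x (hasFDerivAt_norm_of_ne hx)

lemma norm_gradient_radial {n : ℕ} {φ : ℝ → ℝ} {x : EuclideanSpace ℝ (Fin n)} (hx : x ≠ 0)
    (hφ : DifferentiableAt ℝ φ ‖x‖) :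
    ‖gradient (fun y => φ ‖y‖) x‖ = |deriv φ ‖x‖| := by
  have hx' : ‖x‖ ≠ 0 := norm_ne_zero_iff.mpr hx
  rw [gradient, LinearIsometryEquiv.norm_map, (hasFDerivAt_radial hx hφ).fderiv, norm_smul,
    norm_smul, innerSL_apply_norm, norm_inv, norm_norm, inv_mul_cancel₀ hx', mul_one,
    Real.norm_eq_abs]

/-- The Laplacian of a radial function in terms of its profile. -/
lemma lap_radial {n : ℕ} {φ : ℝ → ℝ} (hφ : ContDiff ℝ 2 φ)
    {x : EuclideanSpace ℝ (Fin n)} (hx : x ≠ 0) :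
    lap (fun y => φ ‖y‖) x = deriv (deriv φ) ‖x‖ + (n - 1) / ‖x‖ * deriv φ ‖x‖ := by
  have hx' : ‖x‖ ≠ 0 := norm_ne_zero_iff.mpr hx
  have hd : Differentiable ℝ φ := hφ.differentiable two_ne_zero
  have hd' : Differentiable ℝ (deriv φ) :=
    (hφ.iterate_deriv' 1 1).differentiable one_ne_zero
  have hterm : ∀ i : Fin n,
      fderiv ℝ (fun y => fderiv ℝ (fun y : EuclideanSpace ℝ (Fin n) => φ ‖y‖) y
        (EuclideanSpace.single i 1)) x (EuclideanSpace.single i 1) =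
      (deriv (deriv φ) ‖x‖ / ‖x‖ ^ 2 - deriv φ ‖x‖ / ‖x‖ ^ 3) * x i ^ 2
        + deriv φ ‖x‖ / ‖x‖ := by
    intro i
    -- Away from the origin, `∂ᵢ u y = φ' ‖y‖ * yᵢ / ‖y‖`.
    have hev : (fun y => fderiv ℝ (fun y : EuclideanSpace ℝ (Fin n) => φ ‖y‖) y
        (EuclideanSpace.single i 1)) =ᶠ[nhds x]
        fun y => deriv φ ‖y‖ * (‖y‖⁻¹ * EuclideanSpace.proj (𝕜 := ℝ) i y) := by
      filter_upwards [isOpen_ne.mem_nhds hx] with y hy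
      rw [(hasFDerivAt_radial hy (hd _)).fderiv]
      simp [EuclideanSpace.inner_single_right]
    have hinv : HasFDerivAt (fun y : EuclideanSpace ℝ (Fin n) => ‖y‖⁻¹)
        (-(‖x‖ ^ 2)⁻¹ • (‖x‖⁻¹ • innerSL ℝ x)) x :=
      (hasDerivAt_inv hx').comp_hasFDerivAt x (hasFDerivAt_norm_of_ne hx)
    have hD := (hasFDerivAt_radial hx (hd' ‖x‖)).mul
      (hinv.mul (EuclideanSpace.proj (𝕜 := ℝ) i : EuclideanSpace ℝ (Fin n) →L[ℝ] ℝ).hasFDerivAt)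
    rw [hev.fderiv_eq]
    refine (congrArg (fun L => L (EuclideanSpace.single i 1)) hD.fderiv).trans ?_
    simp [EuclideanSpace.inner_single_right]
    field_simp
    ring
  rw [lap, Finset.sum_congr rfl fun i _ => hterm i, Finset.sum_add_distrib, ← Finset.mul_sum,
    ← EuclideanSpace.real_norm_sq_eq]
  simp
  field_simp
  ring

/-- Polar coordinates on the unit ball. No integrability is needed. -/
lemma setIntegral_ball_radial {n : ℕ} [NeZero n] (h : ℝ → ℝ) :
    ∫ x in Metric.ball (0 : EuclideanSpace ℝ (Fin n)) 1, h ‖x‖ =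
      (n * volume.real (Metric.ball (0 : EuclideanSpace ℝ (Fin n)) 1)) *
        ∫ r in (0 : ℝ)..1, r ^ (n - 1) * h r := by
  have hind : (Metric.ball (0 : EuclideanSpace ℝ (Fin n)) 1).indicator (fun x => h ‖x‖) =
      fun x => (Set.Iio 1).indicator h ‖x‖ := by
    ext x
    simp [Set.indicator]
  rw [← integral_indicator measurableSet_ball, hind, integral_fun_norm_addHaar,
    intervalIntegral.integral_of_le zero_le_one, integral_Ioc_eq_integral_Ioo]
  have : ∀ r : ℝ, r ^ (n - 1) • (Set.Iio 1).indicator h r =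
      (Set.Iio 1).indicator (fun r => r ^ (n - 1) * h r) r := by
    intro r; by_cases hr : r < 1 <;> simp [Set.indicator, hr]
  simp only [finrank_euclideanSpace, Fintype.card_fin, this]
  rw [setIntegral_indicator measurableSet_Iio, Set.Ioi_inter_Iio]
  simp [mul_assoc]

/-- Hardy-type reduction estimate for radial functions (used in Proposition 5). -/
theorem stmt19 (n m : ℕ) (hm : 2 ≤ m) (hmn : 2 * m ≤ n)
    (u : EuclideanSpace ℝ (Fin n) → ℝ) (hsmooth : ContDiff ℝ (⊤ : ℕ∞) u)
    (hcpt : HasCompactSupport u) (hsupp : tsupport u ⊆ Metric.ball 0 1)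
    (hrad : ∃ g : ℝ → ℝ, ∀ x, u x = g ‖x‖) :
    ((n : ℝ) - 2) ^ ((n : ℝ) / m) *
        ∫ x in Metric.ball (0 : EuclideanSpace ℝ (Fin n)) 1,
          ‖gradient u x‖ ^ ((n : ℝ) / m) / ‖x‖ ^ ((n : ℝ) - (n : ℝ) / m) ≤
      ∫ x in Metric.ball (0 : EuclideanSpace ℝ (Fin n)) 1,
        |lap u x| ^ ((n : ℝ) / m) / ‖x‖ ^ ((n : ℝ) - 2 * ((n : ℝ) / m)) := by
  have : NeZero n := ⟨by omega⟩
  have hn : (4 : ℝ) ≤ n := by exact_mod_cast (by omega : 4 ≤ n)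
  have hp : 2 ≤ (n : ℝ) / m := by
    rw [le_div_iff₀ (by exact_mod_cast (by omega : 0 < m))]; exact_mod_cast hmn
  set p : ℝ := (n : ℝ) / m with hpdef
  clear_value p
  let e : EuclideanSpace ℝ (Fin n) := EuclideanSpace.single 0 1
  have he : ‖e‖ = 1 := by simp [e]
  -- The radial profile, extended evenly to `ℝ` by restricting `u` to the line through `e`.
  set φ : ℝ → ℝ := fun t => u (t • e) with hφdef
  have hφ : ContDiff ℝ 2 φ :=
    (contDiff_infty.mp hsmooth 2).comp (contDiff_id.smul contDiff_const)
  have hu : u = fun x => φ ‖x‖ := by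
    obtain ⟨g, hg⟩ := hrad
    ext x
    simp [hφdef, hg, norm_smul, he]
  have hv1 : deriv φ 1 = 0 := by
    have he' : (1 : ℝ) • e ∉ tsupport u := fun h => by
      have := hsupp h
      simp [he] at this
    have hc : Continuous fun t : ℝ => t • e := by fun_prop
    have hev : φ =ᶠ[nhds 1] fun _ => 0 :=
      hc.continuousAt.eventually (notMem_tsupport_iff_eventuallyEq.mp he')
    rw [hev.deriv_eq, deriv_const]
  have hv : ContDiff ℝ 1 (deriv φ) := hφ.iterate_deriv' 1 1
  -- The formulas for radial functions fail only at the origin, a null set.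
  have hne : ∀ᵐ x : EuclideanSpace ℝ (Fin n), x ≠ 0 := by
    simp [ae_iff]
  have hgrad : ∫ x in Metric.ball (0 : EuclideanSpace ℝ (Fin n)) 1,
      ‖gradient u x‖ ^ p / ‖x‖ ^ ((n : ℝ) - p) =
      (n * volume.real (Metric.ball (0 : EuclideanSpace ℝ (Fin n)) 1)) *
        ∫ r in (0 : ℝ)..1, |deriv φ r| ^ p * r ^ (p - 1) := by
    rw [hu, setIntegral_congr_ae (g := fun x => |deriv φ ‖x‖| ^ p / ‖x‖ ^ ((n : ℝ) - p))
      measurableSet_ball, setIntegral_ball_radial fun r => |deriv φ r| ^ p / r ^ ((n : ℝ) - p)]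
    · congr 1
      refine intervalIntegral.integral_congr_Ioo_of_le zero_le_one fun r hr => ?_
      have hr0 : 0 < r := hr.1
      have h1 : r ^ (n - 1) = r ^ (p - 1) * r ^ ((n : ℝ) - p) := by
        rw [← Real.rpow_add hr0, ← Real.rpow_natCast, Nat.cast_pred (Nat.pos_of_neZero n)]
        congr 1; ring
      have := (Real.rpow_pos_of_pos hr0 ((n : ℝ) - p)).ne'
      simp only [h1]
      field_simp
    · filter_upwards [hne] with x hx _
      rw [norm_gradient_radial hx (hφ.differentiable two_ne_zero _)]
  have hlap : ∫ x in Metric.ball (0 : EuclideanSpace ℝ (Fin n)) 1,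
      |lap u x| ^ p / ‖x‖ ^ ((n : ℝ) - 2 * p) =
      (n * volume.real (Metric.ball (0 : EuclideanSpace ℝ (Fin n)) 1)) *
        ∫ r in (0 : ℝ)..1,
          |r * deriv (deriv φ) r + (((n : ℝ) - 2) + 1) * deriv φ r| ^ p * r ^ (p - 1) := by
    rw [hu, setIntegral_congr_ae
      (g := fun x => |deriv (deriv φ) ‖x‖ + (n - 1) / ‖x‖ * deriv φ ‖x‖| ^ p
        / ‖x‖ ^ ((n : ℝ) - 2 * p)) measurableSet_ball,
      setIntegral_ball_radial fun r => |deriv (deriv φ) r + (n - 1) / r * deriv φ r| ^ p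
        / r ^ ((n : ℝ) - 2 * p)]
    · congr 1
      refine intervalIntegral.integral_congr_Ioo_of_le zero_le_one fun r hr => ?_
      have hr0 : 0 < r := hr.1
      have h1 : r ^ (n - 1) = r ^ p * r ^ (p - 1) * r ^ ((n : ℝ) - 2 * p) := by
        rw [← Real.rpow_add hr0, ← Real.rpow_add hr0, ← Real.rpow_natCast,
          Nat.cast_pred (Nat.pos_of_neZero n)]
        congr 1; ring
      have h2 : r * deriv (deriv φ) r + (((n : ℝ) - 2) + 1) * deriv φ r =
          r * (deriv (deriv φ) r + (n - 1) / r * deriv φ r) := by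
        field_simp; ring
      have := (Real.rpow_pos_of_pos hr0 ((n : ℝ) - 2 * p)).ne'
      simp only [h1, h2]
      rw [abs_mul, abs_of_pos hr0, Real.mul_rpow hr0.le (abs_nonneg _)]
      generalize |deriv (deriv φ) r + (n - 1) / r * deriv φ r| ^ p = A
      field_simp
    · filter_upwards [hne] with x hx _
      rw [lap_radial hφ hx]
  rw [hgrad, hlap, mul_left_comm]
  exact mul_le_mul_of_nonneg_left (hardy_one_dim hp (by linarith) hv hv1) (by positivity)
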